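/- Let p > 0, 0 < δ < p, λ > 0, μ > 0, q > 0, r > 0, and let W^{(q)}, 𝕎^{(q)} be the explicit q-scale functions of the Cramér–Lundberg model, with w^{(q)}(x;−z) = W^{(q)}(x+z) + δ∫₀ˣ 𝕎^{(q)}(x−y)W^{(q)′}(y+z)dy. For x > 0: e^{−λr}[ p·w^{(q)}(x;−pr) + ∫₀^{pr} w^{(q)}(x;−(pr−y)) ((pr−y)/r) e^{−μy} Σ_{m=0}^∞ ((μλr)^{m+1}/(m!(m+1)!)) y^m dy ] = e^{qr}(p−δ)𝕎^{(q)}(x) − (1/(μλ)) [ (q+λ)𝕎^{(q)}(x) − (p−δ)𝕎^{(q)′}(x) ] [ (q+λ)e^{qr} − p·C ], where C is the explicit constant given by C = e^{−λr}[ p W^{(q)′}(pr) + A⁻ q⁺(q) e^{q⁺(q)pr} Σ_{m=0}^∞ ((pr(q⁻(q)+μ))^m/(m!(m+1)!)) γ(m+1, (q⁺(q)+μ)pr) (pr(q⁺(q)+μ) − (m+1)) − A⁺ q⁻(q) e^{q⁻(q)pr} Σ_{m=0}^∞ ((pr(q⁺(q)+μ))^m/(m!(m+1)!)) γ(m+1,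 (q⁻(q)+μ)pr) (pr(q⁻(q)+μ) − (m+1)) + (e^{−μpr}/(pr)) Σ_{m=0}^∞ ((pλμr²)^{m+1}/(m!(m+1)!)) ]. -/

import Mathlib

open MeasureTheory

/- Cramér–Lundberg model: X_t = pt − Σ_{i≤N_t}U_i with Poisson(λ) arrivals and
   Exp(μ) claims; Y_t = X_t − δt.  The law of X_r is that of pr − S_r with
   ℙ(S_r ∈ dy) = e^{−λr}(δ₀(dy) + e^{−μy}Σ_m ((μλr)^{m+1}/(m!(m+1)!))y^m dy),
   so the left-hand side below is the Parisian refracted scale function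
   V^{(q)}(x) = ∫₀^∞ w^{(q)}(x;−z)(z/r)ℙ(X_r ∈ dz) for x > 0. -/

noncomputable def qp (p lam μ q : ℝ) : ℝ :=
  (q + lam - μ * p + Real.sqrt ((q + lam - μ * p) ^ 2 + 4 * p * q * μ)) / (2 * p)

noncomputable def qm (p lam μ q : ℝ) : ℝ :=
  (q + lam - μ * p - Real.sqrt ((q + lam - μ * p) ^ 2 + 4 * p * q * μ)) / (2 * p)

noncomputable def Ap (p lam μ q : ℝ) : ℝ := (μ + qp p lam μ q) / (qp p lam μ q - qm p lam μ q)

noncomputable def Am (p lam μ q : ℝ) : ℝ := (μ + qm p lam μ q) / (qp p lam μ q - qm p lam μ q)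

/-- The q-scale function W^{(q)} of X (its formula on [0,∞)). -/
noncomputable def Wq (p lam μ q x : ℝ) : ℝ :=
  1 / p * (Ap p lam μ q * Real.exp (qp p lam μ q * x) -
    Am p lam μ q * Real.exp (qm p lam μ q * x))

/-- The q-scale function 𝕎^{(q)} of Y (its formula on [0,∞)). -/
noncomputable def WWq (p δ lam μ q x : ℝ) : ℝ := Wq (p - δ) lam μ q x

/-- The refracted scale function w^{(q)}(x;−z). -/
noncomputable def wq (p δ lam μ q x z : ℝ) : ℝ :=
  Wq p lam μ q (x + z) +
    δ * ∫ y in (0 : ℝ)..x, WWq p δ lam μ q (x - y) * deriv (Wq p lam μ q) (y + z)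

/-- Lower incomplete gamma function γ(a,x) = ∫₀ˣ t^{a−1}e^{−t} dt. -/
noncomputable def lowerGamma (a x : ℝ) : ℝ :=
  ∫ t in (0 : ℝ)..x, t ^ (a - 1) * Real.exp (-t)

/-- The explicit constant C. -/
noncomputable def Cconst (p lam μ q r : ℝ) : ℝ :=
  Real.exp (-lam * r) *
    (p * deriv (Wq p lam μ q) (p * r) +
      Am p lam μ q * qp p lam μ q * Real.exp (qp p lam μ q * (p * r)) *
        (∑' m : ℕ, (p * r * (qm p lam μ q + μ)) ^ m /
            ((Nat.factorial m : ℝ) * (Nat.factorial (m + 1) : ℝ)) *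
          lowerGamma ((m : ℝ) + 1) ((qp p lam μ q + μ) * (p * r)) *
          (p * r * (qp p lam μ q + μ) - ((m : ℝ) + 1))) -
      Ap p lam μ q * qm p lam μ q * Real.exp (qm p lam μ q * (p * r)) *
        (∑' m : ℕ, (p * r * (qp p lam μ q + μ)) ^ m /
            ((Nat.factorial m : ℝ) * (Nat.factorial (m + 1) : ℝ)) *
          lowerGamma ((m : ℝ) + 1) ((qm p lam μ q + μ) * (p * r)) *
          (p * r * (qm p lam μ q + μ) - ((m : ℝ) + 1))) +
      Real.exp (-μ * (p * r)) / (p * r) *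
        (∑' m : ℕ, (p * lam * μ * r ^ 2) ^ (m + 1) /
          ((Nat.factorial m : ℝ) * (Nat.factorial (m + 1) : ℝ))))

lemma HasSum.of_eq {f g : ℕ → ℝ} {a b : ℝ} (h : HasSum f a) (hfg : ∀ n, g n = f n) (hab : b = a) :
    HasSum g b := by
  rw [funext hfg, hab]
  exact h

lemma summable_pow_div_factorial_mul_factorial_succ (k : ℝ) :
    Summable fun m : ℕ => k ^ m / ((Nat.factorial m : ℝ) * (Nat.factorial (m + 1) : ℝ)) := by
  refine (Real.summable_pow_div_factorial |k|).of_norm_bounded fun m => ?_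
  rw [norm_div, norm_pow, Real.norm_eq_abs, Real.norm_of_nonneg (by positivity)]
  have h : (1 : ℝ) ≤ (Nat.factorial (m + 1) : ℝ) := by exact_mod_cast Nat.factorial_pos _
  have h' : (0 : ℝ) < (Nat.factorial m : ℝ) := by positivity
  gcongr
  nlinarith

lemma norm_besselCoeff_le {k T t : ℝ} (hk : 0 ≤ k) (ht : t ∈ Set.Icc 0 T) (m : ℕ) :
    ‖k ^ (m + 1) / ((Nat.factorial m : ℝ) * (Nat.factorial (m + 1) : ℝ)) * t ^ m‖ ≤
      k * ((k * T) ^ m / ((Nat.factorial m : ℝ) * (Nat.factorial (m + 1) : ℝ))) := by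
  have h0 := ht.1
  have h1 := ht.2
  rw [Real.norm_of_nonneg (by positivity)]
  calc _ ≤ k ^ (m + 1) / ((Nat.factorial m : ℝ) * (Nat.factorial (m + 1) : ℝ)) * T ^ m := by
        gcongr
    _ = _ := by ring

lemma continuousOn_besselSeries {k : ℝ} (hk : 0 ≤ k) (T : ℝ) :
    ContinuousOn (fun y : ℝ => ∑' m : ℕ, k ^ (m + 1) /
      ((Nat.factorial m : ℝ) * (Nat.factorial (m + 1) : ℝ)) * y ^ m) (Set.Icc 0 T) :=
  continuousOn_tsum (fun m => by fun_prop)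
    ((summable_pow_div_factorial_mul_factorial_succ (k * T)).mul_left k)
    fun m _ ht => norm_besselCoeff_le hk ht m

lemma hasSum_integral_mul_besselSeries {k T : ℝ} (hk : 0 ≤ k) (hT : 0 ≤ T) {g : ℝ → ℝ}
    (hg : Continuous g) :
    HasSum (fun m : ℕ => k ^ (m + 1) / ((Nat.factorial m : ℝ) * (Nat.factorial (m + 1) : ℝ)) *
        ∫ y in (0 : ℝ)..T, g y * y ^ m)
      (∫ y in (0 : ℝ)..T, g y * ∑' m : ℕ, k ^ (m + 1) /
        ((Nat.factorial m : ℝ) * (Nat.factorial (m + 1) : ℝ)) * y ^ m) := by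
  have hsum := (summable_pow_div_factorial_mul_factorial_succ (k * T)).mul_left k
  have hmem : ∀ t ∈ Set.uIoc 0 T, t ∈ Set.Icc 0 T := by
    intro t ht
    rw [Set.uIoc_of_le hT] at ht
    exact Set.Ioc_subset_Icc_self ht
  have key := intervalIntegral.hasSum_integral_of_dominated_convergence (μ := volume)
    (a := 0) (b := T)
    (F := fun (m : ℕ) y => g y * (k ^ (m + 1) /
      ((Nat.factorial m : ℝ) * (Nat.factorial (m + 1) : ℝ)) * y ^ m))
    (f := fun y => g y * ∑' m : ℕ, k ^ (m + 1) /
      ((Nat.factorial m : ℝ) * (Nat.factorial (m + 1) : ℝ)) * y ^ m)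
    (fun m y => |g y| * (k * ((k * T) ^ m /
      ((Nat.factorial m : ℝ) * (Nat.factorial (m + 1) : ℝ)))))
    (fun m => (by fun_prop : Continuous _).aestronglyMeasurable)
    (fun m => .of_forall fun t ht => by
      rw [norm_mul, Real.norm_eq_abs (g t)]
      exact mul_le_mul_of_nonneg_left (norm_besselCoeff_le hk (hmem t ht) m) (abs_nonneg _))
    (.of_forall fun t _ => hsum.mul_left _)
    (by
      simp_rw [tsum_mul_left]
      exact (by fun_prop : Continuous _).intervalIntegrable _ _)
    (.of_forall fun t ht => (hsum.of_norm_bounded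
      fun m => norm_besselCoeff_le hk (hmem t ht) m).hasSum.mul_left _)
  refine key.of_eq (fun m => ?_) rfl
  rw [← intervalIntegral.integral_const_mul]
  congr 1
  ext y
  ring

lemma lowerGamma_natCast_add_one (m : ℕ) (x : ℝ) :
    lowerGamma ((m : ℝ) + 1) x = ∫ t in (0 : ℝ)..x, t ^ m * Real.exp (-t) := by
  simp [lowerGamma]

lemma lowerGamma_one (x : ℝ) : lowerGamma (((0 : ℕ) : ℝ) + 1) x = 1 - Real.exp (-x) := by
  rw [lowerGamma_natCast_add_one]
  simp

lemma lowerGamma_succ (m : ℕ) (x : ℝ) :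
    lowerGamma (((m + 1 : ℕ) : ℝ) + 1) x =
      ((m : ℝ) + 1) * lowerGamma ((m : ℝ) + 1) x - x ^ (m + 1) * Real.exp (-x) := by
  rw [lowerGamma_natCast_add_one, lowerGamma_natCast_add_one]
  have h : ∀ t ∈ Set.uIcc 0 x, HasDerivAt (fun t : ℝ => t ^ (m + 1) * Real.exp (-t))
      (((m : ℝ) + 1) * (t ^ m * Real.exp (-t)) - t ^ (m + 1) * Real.exp (-t)) t := by
    intro t _
    refine ((hasDerivAt_pow (m + 1) t).mul (hasDerivAt_neg t).exp).congr_deriv ?_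
    simp
    ring
  have key := intervalIntegral.integral_eq_sub_of_hasDerivAt h
    ((by fun_prop : Continuous _).intervalIntegrable _ _)
  rw [intervalIntegral.integral_sub ((by fun_prop : Continuous _).intervalIntegrable _ _)
    ((by fun_prop : Continuous _).intervalIntegrable _ _),
    intervalIntegral.integral_const_mul] at key
  simp at key
  linarith

/-- The remainder `∑_{k ≥ n} x ^ k / k!` of the exponential series. -/
noncomputable def expTail (n : ℕ) (x : ℝ) : ℝ :=
  Real.exp x - ∑ k ∈ Finset.range n, x ^ k / (Nat.factorial k : ℝ)

lemma expTail_succ (n : ℕ) (x : ℝ) :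
    expTail (n + 1) x = expTail n x - x ^ n / (Nat.factorial n : ℝ) := by
  simp only [expTail, Finset.sum_range_succ]
  ring

lemma exp_mul_lowerGamma (m : ℕ) (x : ℝ) :
    Real.exp x * lowerGamma ((m : ℝ) + 1) x = (Nat.factorial m : ℝ) * expTail (m + 1) x := by
  have he : Real.exp x * Real.exp (-x) = 1 := by rw [← Real.exp_add]; simp
  induction m with
  | zero =>
    rw [lowerGamma_one]
    simp [expTail]
    linarith
  | succ m ih =>
    rw [lowerGamma_succ, expTail_succ (m + 1)]
    have h : ((Nat.factorial (m + 1) : ℕ) : ℝ) = ((m : ℝ) + 1) * (Nat.factorial m : ℝ) := by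
      push_cast [Nat.factorial_succ]; ring
    have h' : ((Nat.factorial (m + 1) : ℕ) : ℝ) ≠ 0 := by positivity
    rw [mul_sub, mul_sub, mul_div_cancel₀ _ h']
    nth_rewrite 1 [h]
    linear_combination ((m : ℝ) + 1) * ih - x ^ (m + 1) * he

lemma hasSum_pow_div_factorial (x : ℝ) :
    HasSum (fun k : ℕ => x ^ k / (Nat.factorial k : ℝ)) (Real.exp x) := by
  rw [Real.exp_eq_exp_ℝ]
  exact NormedSpace.expSeries_div_hasSum_exp x

lemma hasSum_expTail (n : ℕ) (x : ℝ) :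
    HasSum (fun k : ℕ => if n ≤ k then x ^ k / (Nat.factorial k : ℝ) else 0) (expTail n x) := by
  have h := hasSum_pow_div_factorial x
  have h2 : HasSum (fun k : ℕ => if k ∈ Finset.range n then x ^ k / (Nat.factorial k : ℝ) else 0)
      (∑ k ∈ Finset.range n, x ^ k / (Nat.factorial k : ℝ)) := by
    have h3 := hasSum_sum_of_ne_finset_zero (s := Finset.range n)
      (f := fun k : ℕ => if k ∈ Finset.range n then x ^ k / (Nat.factorial k : ℝ) else 0)
      (L := SummationFilter.unconditional ℕ) fun k hk => by simp [hk]
    rwa [Finset.sum_congr rfl fun k hk => if_pos hk] at h3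
  refine (h.sub h2).of_eq (fun k => ?_) rfl
  by_cases hk : n ≤ k
  · simp [hk, not_lt.mpr hk]
  · simp [hk, not_le.mp hk]

lemma abs_expTail_le (n : ℕ) (x : ℝ) : |expTail n x| ≤ Real.exp |x| := by
  refine (hasSum_expTail n x).norm_le_of_bounded (hasSum_pow_div_factorial |x|) fun k => ?_
  split_ifs
  · simp
  · simp; positivity

lemma summable_pow_div_factorial_mul_expTail (u v : ℝ) :
    Summable fun n : ℕ => v ^ n / (Nat.factorial n : ℝ) * expTail n u := by
  refine ((Real.summable_pow_div_factorial |v|).mul_right (Real.exp |u|)).of_norm_bounded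
    fun n => ?_
  rw [norm_mul, norm_div, norm_pow, Real.norm_eq_abs, Real.norm_natCast, Real.norm_eq_abs]
  gcongr
  exact abs_expTail_le n u

lemma tsum_expTail_swap (u v : ℝ) :
    ∑' n : ℕ, u ^ n / (Nat.factorial n : ℝ) * expTail n v =
      ∑' n : ℕ, v ^ n / (Nat.factorial n : ℝ) * (Real.exp u - expTail (n + 1) u) := by
  set f : ℕ → ℕ → ℝ := fun k n =>
    if k ≤ n then u ^ k / (Nat.factorial k : ℝ) * (v ^ n / (Nat.factorial n : ℝ)) else 0 with hf
  have hsum : Summable (Function.uncurry f) := by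
    refine ((Real.summable_pow_div_factorial u).norm.mul_of_nonneg
      (Real.summable_pow_div_factorial v).norm (fun _ => norm_nonneg _)
      fun _ => norm_nonneg _).of_norm_bounded fun x => ?_
    simp only [Function.uncurry, hf]
    split_ifs
    · rw [norm_mul]
    · rw [norm_zero]
      positivity
  have hl : ∀ k, ∑' n, f k n = u ^ k / (Nat.factorial k : ℝ) * expTail k v := fun k => by
    rw [← (hasSum_expTail k v).tsum_eq, ← tsum_mul_left]
    exact tsum_congr fun n => by simp only [hf, mul_ite, mul_zero]
  have hr : ∀ n, ∑' k, f k n =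
      v ^ n / (Nat.factorial n : ℝ) * (Real.exp u - expTail (n + 1) u) := fun n => by
    rw [← ((hasSum_pow_div_factorial u).sub (hasSum_expTail (n + 1) u)).tsum_eq, ← tsum_mul_left]
    refine tsum_congr fun k => ?_
    by_cases hk : k ≤ n
    · simp [hf, hk, not_lt.mpr hk, mul_comm]
    · simp [hf, hk, not_le.mp hk]
  rw [← tsum_congr hl, ← tsum_congr hr]
  exact hsum.tsum_comm.symm

lemma summable_pow_div_factorial_mul_pow_div_factorial (u v : ℝ) :
    Summable fun n : ℕ => v ^ n / (Nat.factorial n : ℝ) * (u ^ n / (Nat.factorial n : ℝ)) := by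
  refine ((Real.summable_pow_div_factorial |v|).mul_right (Real.exp |u|)).of_norm_bounded
    fun n => ?_
  rw [norm_mul, norm_div, norm_pow, norm_div, norm_pow]
  simp only [Real.norm_eq_abs, Nat.abs_cast]
  gcongr
  exact Real.pow_div_factorial_le_exp |u| (abs_nonneg u) n

/-- Splitting the double exponential series along the diagonal. -/
lemma tsum_expTail_add_tsum_expTail (u v : ℝ) :
    ∑' n : ℕ, v ^ n / (Nat.factorial n : ℝ) * expTail n u +
        ∑' n : ℕ, u ^ n / (Nat.factorial n : ℝ) * expTail n v =
      Real.exp (u + v) +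
        ∑' n : ℕ, v ^ n / (Nat.factorial n : ℝ) * (u ^ n / (Nat.factorial n : ℝ)) := by
  have h1 := summable_pow_div_factorial_mul_expTail u v
  have h2 := (hasSum_pow_div_factorial v).mul_right (Real.exp u)
  have h3 := summable_pow_div_factorial_mul_pow_div_factorial u v
  have h4 := ((h2.sub h1.hasSum).add h3.hasSum).tsum_eq
  rw [tsum_expTail_swap u v, add_comm u v, Real.exp_add,
    tsum_congr (f := fun n : ℕ => v ^ n / (Nat.factorial n : ℝ) *
      (Real.exp u - expTail (n + 1) u)) (g := fun n : ℕ => v ^ n / (Nat.factorial n : ℝ) * Real.exp u -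
      v ^ n / (Nat.factorial n : ℝ) * expTail n u +
      v ^ n / (Nat.factorial n : ℝ) * (u ^ n / (Nat.factorial n : ℝ)))
      fun n => by rw [expTail_succ]; ring, h4]
  ring

lemma hasSum_sub_mul_expTail (u v : ℝ) :
    HasSum (fun n : ℕ => v ^ n / (Nat.factorial n : ℝ) * (u - n) * expTail n u)
      ((u - v) * ∑' n : ℕ, v ^ n / (Nat.factorial n : ℝ) * expTail n u +
        v * ∑' n : ℕ, v ^ n / (Nat.factorial n : ℝ) * (u ^ n / (Nat.factorial n : ℝ))) := by
  have h1 := (summable_pow_div_factorial_mul_expTail u v).hasSum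
  have h3 := (summable_pow_div_factorial_mul_pow_div_factorial u v).hasSum
  have h4 : HasSum (fun n : ℕ => v ^ n / (Nat.factorial n : ℝ) * n * expTail n u)
      (v * (∑' n : ℕ, v ^ n / (Nat.factorial n : ℝ) * expTail n u -
        ∑' n : ℕ, v ^ n / (Nat.factorial n : ℝ) * (u ^ n / (Nat.factorial n : ℝ)))) := by
    rw [← hasSum_nat_add_iff' 1]
    refine ((h1.sub h3).mul_left v).of_eq (fun n => ?_) (by simp)
    rw [expTail_succ, Nat.factorial_succ]
    push_cast
    field_simp
    ring
  exact ((h1.mul_left u).sub h4).of_eq (fun n => by ring) (by ring)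

/-- The series of incomplete gamma functions that enters the constant `Cconst`. -/
noncomputable def gammaSeries (u v : ℝ) : ℝ :=
  ∑' m : ℕ, v ^ m / ((Nat.factorial m : ℝ) * (Nat.factorial (m + 1) : ℝ)) *
    lowerGamma ((m : ℝ) + 1) u * (u - ((m : ℝ) + 1))

lemma mul_exp_mul_gammaSeries (u v : ℝ) :
    u * Real.exp u + v * Real.exp u * gammaSeries u v =
      (u - v) * ∑' n : ℕ, v ^ n / (Nat.factorial n : ℝ) * expTail n u +
        v * ∑' n : ℕ, v ^ n / (Nat.factorial n : ℝ) * (u ^ n / (Nat.factorial n : ℝ)) := by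
  have h := hasSum_sub_mul_expTail u v
  rw [← h.tsum_eq, h.summable.tsum_eq_zero_add, gammaSeries, ← tsum_mul_left]
  congr 1
  · simp [expTail]
  · refine tsum_congr fun m => ?_
    have hm := exp_mul_lowerGamma m u
    have h0 : (Nat.factorial m : ℝ) ≠ 0 := by positivity
    have h1 : (Nat.factorial (m + 1) : ℝ) ≠ 0 := by positivity
    push_cast
    field_simp
    linear_combination (v ^ (m + 1) * (u - (m + 1))) * hm

lemma gammaSeries_antisymm (u v : ℝ) :
    u * Real.exp u + v * Real.exp u * gammaSeries u v -
        (v * Real.exp v + u * Real.exp v * gammaSeries v u) = (u - v) * Real.exp (u + v) := by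
  have h := tsum_expTail_add_tsum_expTail u v
  rw [mul_exp_mul_gammaSeries, mul_exp_mul_gammaSeries,
    tsum_congr fun n : ℕ => mul_comm (u ^ n / (Nat.factorial n : ℝ)) (v ^ n / _)]
  linear_combination (u - v) * h

lemma integral_exp_mul_pow {α : ℝ} (hα : α ≠ 0) (T : ℝ) (m : ℕ) :
    ∫ y in (0 : ℝ)..T, Real.exp (-(α * y)) * y ^ m =
      lowerGamma ((m : ℝ) + 1) (T * α) / α ^ (m + 1) := by
  have h := intervalIntegral.mul_integral_comp_mul_left (a := 0) (b := T)
    (f := fun t : ℝ => t ^ m * Real.exp (-t)) α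
  rw [lowerGamma_natCast_add_one, mul_comm T α, eq_div_iff (pow_ne_zero _ hα)]
  rw [mul_zero] at h
  rw [← h, mul_comm, ← intervalIntegral.integral_const_mul, ← intervalIntegral.integral_const_mul]
  congr 1
  ext y
  ring

lemma integral_exp_mul_sub_mul_pow {s μ r : ℝ} (hα : s + μ ≠ 0) (T : ℝ) (m : ℕ) :
    ∫ y in (0 : ℝ)..T, Real.exp (s * (T - y)) * ((T - y) / r) * Real.exp (-μ * y) * y ^ m =
      Real.exp (s * T) / (r * (s + μ) ^ (m + 2)) *
        (lowerGamma ((m : ℝ) + 1) (T * (s + μ)) * (T * (s + μ) - ((m : ℝ) + 1)) +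
          (T * (s + μ)) ^ (m + 1) * Real.exp (-(T * (s + μ)))) := by
  have h : ∀ y : ℝ, Real.exp (s * (T - y)) * ((T - y) / r) * Real.exp (-μ * y) * y ^ m =
      Real.exp (s * T) / r * T * (Real.exp (-((s + μ) * y)) * y ^ m) -
        Real.exp (s * T) / r * (Real.exp (-((s + μ) * y)) * y ^ (m + 1)) := by
    intro y
    have h1 : Real.exp (s * (T - y)) * Real.exp (-μ * y) =
        Real.exp (s * T) * Real.exp (-((s + μ) * y)) := by
      rw [← Real.exp_add, ← Real.exp_add]
      ring_nf
    linear_combination ((T - y) / r * y ^ m) * h1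
  simp_rw [h]
  rw [intervalIntegral.integral_sub ((by fun_prop : Continuous _).intervalIntegrable _ _)
    ((by fun_prop : Continuous _).intervalIntegrable _ _),
    intervalIntegral.integral_const_mul, intervalIntegral.integral_const_mul,
    integral_exp_mul_pow hα, integral_exp_mul_pow hα, lowerGamma_succ]
  rcases eq_or_ne r 0 with rfl | hr
  · simp
  field_simp
  ring

lemma integral_exp_mul_besselSeries {s μ k T r : ℝ} (hk : 0 ≤ k) (hT : 0 ≤ T)
    (hα : s + μ ≠ 0) :
    ∫ y in (0 : ℝ)..T, Real.exp (s * (T - y)) * ((T - y) / r) * Real.exp (-μ * y) *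
        ∑' m : ℕ, k ^ (m + 1) / ((Nat.factorial m : ℝ) * (Nat.factorial (m + 1) : ℝ)) * y ^ m =
      Real.exp (s * T) * (k / (r * (s + μ) ^ 2)) *
        (gammaSeries (T * (s + μ)) (k / (s + μ)) +
          Real.exp (-(T * (s + μ))) * (T * (s + μ)) *
            ∑' m : ℕ, (T * k) ^ m / ((Nat.factorial m : ℝ) * (Nat.factorial (m + 1) : ℝ))) := by
  rcases eq_or_ne r 0 with rfl | hr
  · simp
  rcases hk.eq_or_lt with rfl | hk'
  · simp
  have h := hasSum_integral_mul_besselSeries hk hT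
    (g := fun y => Real.exp (s * (T - y)) * ((T - y) / r) * Real.exp (-μ * y)) (by fun_prop)
  simp_rw [integral_exp_mul_sub_mul_pow hα] at h
  refine h.unique ?_
  have hs := h.summable
  clear h
  have hE := Real.exp_ne_zero (s * T)
  generalize s + μ = α at hα hs ⊢
  have hB := (summable_pow_div_factorial_mul_factorial_succ (T * k)).hasSum
  have hg : Summable fun m : ℕ => (k / α) ^ m /
      ((Nat.factorial m : ℝ) * (Nat.factorial (m + 1) : ℝ)) *
      lowerGamma ((m : ℝ) + 1) (T * α) * (T * α - ((m : ℝ) + 1)) := by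
    refine ((hs.hasSum.mul_left (r * α ^ 2 / (k * Real.exp (s * T)))).sub
      (hB.mul_left (Real.exp (-(T * α)) * (T * α)))).summable.congr fun m => ?_
    rw [div_pow, mul_pow T, mul_pow T]
    field_simp
    ring
  refine ((hg.hasSum.add (hB.mul_left _)).mul_left _).of_eq (fun m => ?_) rfl
  rw [div_pow, mul_pow T, mul_pow T]
  field_simp
  ring

section ScaleFunction

variable {p lam μ q : ℝ}

lemma sqrt_discrim_pos (hp : 0 < p) (hμ : 0 < μ) (hq : 0 < q) :
    0 < Real.sqrt ((q + lam - μ * p) ^ 2 + 4 * p * q * μ) :=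
  Real.sqrt_pos.mpr (by positivity)

lemma qp_sub_qm_pos (hp : 0 < p) (hμ : 0 < μ) (hq : 0 < q) :
    0 < qp p lam μ q - qm p lam μ q := by
  have h := sqrt_discrim_pos (lam := lam) hp hμ hq
  rw [qp, qm, ← sub_div]
  apply div_pos <;> linarith

lemma qp_add_qm (hp : 0 < p) : p * (qp p lam μ q + qm p lam μ q) = q + lam - μ * p := by
  rw [qp, qm]
  field_simp
  ring

lemma qp_mul_qm (hp : 0 < p) (hμ : 0 < μ) (hq : 0 < q) :
    p * (qp p lam μ q * qm p lam μ q) = -(q * μ) := by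
  have h := Real.sq_sqrt (show 0 ≤ (q + lam - μ * p) ^ 2 + 4 * p * q * μ by positivity)
  rw [qp, qm]
  generalize Real.sqrt ((q + lam - μ * p) ^ 2 + 4 * p * q * μ) = D at h ⊢
  field_simp
  linear_combination -h

lemma qp_add_mul_qm_add (hp : 0 < p) (hμ : 0 < μ) (hq : 0 < q) :
    p * ((qp p lam μ q + μ) * (qm p lam μ q + μ)) = lam * μ := by
  linear_combination qp_mul_qm (lam := lam) hp hμ hq + μ * qp_add_qm (lam := lam) (μ := μ) (q := q) hp

/-- The function `((q + λ) W - p W') / (λ μ)`, where `W` is the `q`-scale function. -/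
noncomputable def Kq (p lam μ q x : ℝ) : ℝ :=
  (Real.exp (qp p lam μ q * x) - Real.exp (qm p lam μ q * x)) /
    (p * (qp p lam μ q - qm p lam μ q))

lemma Wq_eq (x : ℝ) :
    Wq p lam μ q x = ((qp p lam μ q + μ) * Real.exp (qp p lam μ q * x) -
      (qm p lam μ q + μ) * Real.exp (qm p lam μ q * x)) /
        (p * (qp p lam μ q - qm p lam μ q)) := by
  rw [Wq, Ap, Am, ← div_div, sub_div, mul_sub]
  ring

lemma hasDerivAt_exp_const_mul (a x : ℝ) :
    HasDerivAt (fun x => Real.exp (a * x)) (a * Real.exp (a * x)) x := by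
  simpa [mul_comm] using ((hasDerivAt_id x).const_mul a).exp

lemma hasDerivAt_Wq (x : ℝ) :
    HasDerivAt (Wq p lam μ q) ((qp p lam μ q * (qp p lam μ q + μ) * Real.exp (qp p lam μ q * x) -
      qm p lam μ q * (qm p lam μ q + μ) * Real.exp (qm p lam μ q * x)) /
        (p * (qp p lam μ q - qm p lam μ q))) x := by
  rw [funext Wq_eq]
  refine ((((hasDerivAt_exp_const_mul (qp p lam μ q) x).const_mul _).sub
    ((hasDerivAt_exp_const_mul (qm p lam μ q) x).const_mul _)).div_const _).congr_deriv ?_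
  ring

lemma hasDerivAt_Wq_Kq (hp : 0 < p) (hμ : 0 < μ) (hq : 0 < q) (x : ℝ) :
    HasDerivAt (Wq p lam μ q) (((q + lam) * Wq p lam μ q x - lam * μ * Kq p lam μ q x) / p) x := by
  refine (hasDerivAt_Wq x).congr_deriv ?_
  have hd := (qp_sub_qm_pos (lam := lam) hp hμ hq).ne'
  have h1 := qp_add_qm (lam := lam) (μ := μ) (q := q) hp
  have h2 := qp_mul_qm (lam := lam) hp hμ hq
  rw [Wq_eq, Kq]
  set a := qp p lam μ q
  set b := qm p lam μ q
  generalize Real.exp (a * x) = E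
  generalize Real.exp (b * x) = F
  field_simp
  linear_combination (E * (a + μ) - F * (b + μ)) * h1 - (E - F) * (h2 + μ * h1)

lemma hasDerivAt_Kq (x : ℝ) :
    HasDerivAt (Kq p lam μ q) (Wq p lam μ q x - μ * Kq p lam μ q x) x := by
  refine (((hasDerivAt_exp_const_mul (qp p lam μ q) x).sub
    (hasDerivAt_exp_const_mul (qm p lam μ q) x)).div_const _).congr_deriv ?_
  rw [Wq_eq, Kq]
  ring

lemma Wq_zero (hp : 0 < p) (hμ : 0 < μ) (hq : 0 < q) : p * Wq p lam μ q 0 = 1 := by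
  have hd := (qp_sub_qm_pos (lam := lam) hp hμ hq).ne'
  rw [Wq_eq]
  simp
  field_simp

lemma Kq_zero : Kq p lam μ q 0 = 0 := by simp [Kq]

lemma continuous_Wq : Continuous (Wq p lam μ q) := by
  unfold Wq
  fun_prop

lemma continuous_deriv_Wq : Continuous (deriv (Wq p lam μ q)) := by
  rw [funext fun x => (hasDerivAt_Wq (p := p) (lam := lam) (μ := μ) (q := q) x).deriv]
  fun_prop

/-- The refracted scale function in closed form. -/
lemma wq_eq {δ : ℝ} (hδp : δ < p) (hp : 0 < p) (hμ : 0 < μ) (hq : 0 < q)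
    (x z : ℝ) :
    wq p δ lam μ q x z = (p - δ) * WWq p δ lam μ q x * Wq p lam μ q z -
      lam * μ * Kq (p - δ) lam μ q x * Kq p lam μ q z := by
  have hc : 0 < p - δ := sub_pos.mpr hδp
  have h : ∀ y ∈ Set.uIcc 0 x, HasDerivAt
      (fun y => lam * μ * (Kq (p - δ) lam μ q (x - y) * Kq p lam μ q (y + z)) -
        (p - δ) * (Wq (p - δ) lam μ q (x - y) * Wq p lam μ q (y + z)))
      (δ * (WWq p δ lam μ q (x - y) * deriv (Wq p lam μ q) (y + z))) y := by
    intro y _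
    have hl : HasDerivAt (fun y => x - y) (-1) y := by simpa using (hasDerivAt_id y).const_sub x
    have hr : HasDerivAt (fun y => y + z) 1 y := (hasDerivAt_id y).add_const z
    have k1 := (hasDerivAt_Kq (p := p - δ) (lam := lam) (μ := μ) (q := q) (x - y)).comp y hl
    have k2 := (hasDerivAt_Kq (p := p) (lam := lam) (μ := μ) (q := q) (y + z)).comp y hr
    have w1 := (hasDerivAt_Wq_Kq (lam := lam) hc hμ hq (x - y)).comp y hl
    have w2 := (hasDerivAt_Wq_Kq (lam := lam) hp hμ hq (y + z)).comp y hr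
    refine (((k1.mul k2).const_mul _).sub ((w1.mul w2).const_mul _)).congr_deriv ?_
    rw [(hasDerivAt_Wq_Kq (lam := lam) hp hμ hq (y + z)).deriv, WWq]
    simp only [Function.comp_apply]
    field_simp
    ring
  have hW : Continuous (Wq (p - δ) lam μ q) := continuous_Wq
  have hW' : Continuous (deriv (Wq p lam μ q)) := continuous_deriv_Wq
  have key := intervalIntegral.integral_eq_sub_of_hasDerivAt h
    (Continuous.intervalIntegrable (by unfold WWq; fun_prop) _ _)
  have h0 := Wq_zero (lam := lam) hc hμ hq
  rw [wq, ← intervalIntegral.integral_const_mul, key, WWq]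
  simp only [sub_self, sub_zero, zero_add, Kq_zero]
  linear_combination -Wq p lam μ q (x + z) * h0

end ScaleFunction

section KendallIdentity

variable {p lam μ q r : ℝ}

/-- The integral of `z ↦ e^{s z} z / r` against the law of `X_r` on `(0, ∞)`, without the factor
`e^{-λ r}`. -/
noncomputable def expTransform (p lam μ r s : ℝ) : ℝ :=
  p * Real.exp (s * (p * r)) +
    ∫ y in (0 : ℝ)..(p * r),
      Real.exp (s * (p * r - y)) * ((p * r - y) / r) * Real.exp (-μ * y) *
        ∑' m : ℕ, (μ * lam * r) ^ (m + 1) /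
          ((Nat.factorial m : ℝ) * (Nat.factorial (m + 1) : ℝ)) * y ^ m

lemma transform_sub_exp (hp : 0 < p) (hlam : 0 < lam) (hμ : 0 < μ) (hr : 0 < r)
    (a b X Y : ℝ) :
    p * (X * Real.exp (a * (p * r)) - Y * Real.exp (b * (p * r))) +
      ∫ y in (0 : ℝ)..(p * r),
        (X * Real.exp (a * (p * r - y)) - Y * Real.exp (b * (p * r - y))) * ((p * r - y) / r) *
          Real.exp (-μ * y) * ∑' m : ℕ, (μ * lam * r) ^ (m + 1) /
            ((Nat.factorial m : ℝ) * (Nat.factorial (m + 1) : ℝ)) * y ^ m =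
      X * expTransform p lam μ r a - Y * expTransform p lam μ r b := by
  have hS := continuousOn_besselSeries (show 0 ≤ μ * lam * r by positivity) (p * r)
  rw [← Set.uIcc_of_le (show 0 ≤ p * r by positivity)] at hS
  have hint : ∀ s : ℝ, IntervalIntegrable (fun y => Real.exp (s * (p * r - y)) *
      ((p * r - y) / r) * Real.exp (-μ * y) * ∑' m : ℕ, (μ * lam * r) ^ (m + 1) /
        ((Nat.factorial m : ℝ) * (Nat.factorial (m + 1) : ℝ)) * y ^ m) volume 0 (p * r) :=
    fun s => (ContinuousOn.mul (Continuous.continuousOn (by fun_prop)) hS).intervalIntegrable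
  rw [expTransform, expTransform, mul_add, mul_add, ← intervalIntegral.integral_const_mul,
    ← intervalIntegral.integral_const_mul, add_sub_add_comm,
    ← intervalIntegral.integral_sub ((hint a).const_mul X) ((hint b).const_mul Y)]
  congr 1
  · ring
  · congr 1
    ext y
    ring

lemma expTransform_eq (hp : 0 < p) (hlam : 0 < lam) (hμ : 0 < μ) (hr : 0 < r) {a b : ℝ}
    (hab : p * ((a + μ) * (b + μ)) = lam * μ) :
    (a + μ) * expTransform p lam μ r a =
      p * Real.exp (a * (p * r)) * ((a + μ) + (b + μ) *
        gammaSeries (p * r * (a + μ)) (p * r * (b + μ))) +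
      p * r * (lam * μ) * Real.exp (-μ * (p * r)) * ∑' m : ℕ, (p * lam * μ * r ^ 2) ^ m /
          ((Nat.factorial m : ℝ) * (Nat.factorial (m + 1) : ℝ)) := by
  have hα : a + μ ≠ 0 := by
    intro h
    rw [h] at hab
    have : 0 < lam * μ := by positivity
    simp at hab
    rcases hab with h | h <;> linarith
  have hv : μ * lam * r / (a + μ) = p * r * (b + μ) := by
    field_simp
    linear_combination -hab
  have hk : μ * lam * r / (r * (a + μ) ^ 2) = p * (b + μ) / (a + μ) := by
    field_simp
    linear_combination -hab
  have he : Real.exp (-(p * r * (a + μ))) * Real.exp (a * (p * r)) = Real.exp (-μ * (p * r)) := by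
    rw [← Real.exp_add]
    ring_nf
  rw [expTransform, integral_exp_mul_besselSeries (by positivity) (by positivity) hα, hv, hk,
    show p * r * (μ * lam * r) = p * lam * μ * r ^ 2 by ring, ← he, ← hab]
  field_simp
  ring

/-- Kendall's identity for the scale function. -/
lemma expTransform_kendall (hp : 0 < p) (hlam : 0 < lam) (hμ : 0 < μ) (hq : 0 < q) (hr : 0 < r) :
    (qp p lam μ q + μ) * expTransform p lam μ r (qp p lam μ q) -
        (qm p lam μ q + μ) * expTransform p lam μ r (qm p lam μ q) =
      p * (qp p lam μ q - qm p lam μ q) * Real.exp ((q + lam) * r) := by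
  have hab := qp_add_mul_qm_add (lam := lam) hp hμ hq
  have hsum := qp_add_qm (lam := lam) (μ := μ) (q := q) hp
  set a := qp p lam μ q
  set b := qm p lam μ q
  rw [expTransform_eq hp hlam hμ hr hab, expTransform_eq hp hlam hμ hr
    (show p * ((b + μ) * (a + μ)) = lam * μ by linear_combination hab)]
  have key := gammaSeries_antisymm (p * r * (a + μ)) (p * r * (b + μ))
  have h1 : ∀ s, Real.exp (s * (p * r)) =
      Real.exp (p * r * (s + μ)) * Real.exp (-μ * (p * r)) := fun s => by
    rw [← Real.exp_add]
    ring_nf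
  have h2 : Real.exp ((q + lam) * r) =
      Real.exp (p * r * (a + μ) + p * r * (b + μ)) * Real.exp (-μ * (p * r)) := by
    rw [← Real.exp_add]
    congr 1
    linear_combination -r * hsum
  have hT : p * r ≠ 0 := by positivity
  rw [h1 a, h1 b, h2]
  apply mul_left_cancel₀ hT
  linear_combination p * Real.exp (-μ * (p * r)) * key

lemma Cconst_eq (hp : 0 < p) (hlam : 0 < lam) (hμ : 0 < μ) (hq : 0 < q) (hr : 0 < r) :
    p * (qp p lam μ q - qm p lam μ q) * Cconst p lam μ q r = Real.exp (-lam * r) *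
      (qp p lam μ q * ((qp p lam μ q + μ) * expTransform p lam μ r (qp p lam μ q)) -
        qm p lam μ q * ((qm p lam μ q + μ) * expTransform p lam μ r (qm p lam μ q))) := by
  have hab := qp_add_mul_qm_add (lam := lam) hp hμ hq
  have hd := (qp_sub_qm_pos (lam := lam) hp hμ hq).ne'
  rw [Cconst, (hasDerivAt_Wq (p * r)).deriv, Ap, Am]
  set a := qp p lam μ q
  set b := qm p lam μ q
  rw [expTransform_eq hp hlam hμ hr hab, expTransform_eq hp hlam hμ hr
    (show p * ((b + μ) * (a + μ)) = lam * μ by linear_combination hab)]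
  have hg : ∀ s t : ℝ, (∑' m : ℕ, (p * r * t) ^ m /
      ((Nat.factorial m : ℝ) * (Nat.factorial (m + 1) : ℝ)) *
      lowerGamma ((m : ℝ) + 1) (s * (p * r)) * (p * r * s - ((m : ℝ) + 1))) =
      gammaSeries (p * r * s) (p * r * t) := fun s t => by
    rw [gammaSeries, mul_comm s]
  have hB : (∑' m : ℕ, (p * lam * μ * r ^ 2) ^ (m + 1) /
      ((Nat.factorial m : ℝ) * (Nat.factorial (m + 1) : ℝ))) =
      p * lam * μ * r ^ 2 * ∑' m : ℕ, (p * lam * μ * r ^ 2) ^ m /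
      ((Nat.factorial m : ℝ) * (Nat.factorial (m + 1) : ℝ)) := by
    rw [← tsum_mul_left]
    exact tsum_congr fun m => by ring
  rw [hg, hg, hB]
  generalize (∑' m : ℕ, (p * lam * μ * r ^ 2) ^ m /
      ((Nat.factorial m : ℝ) * (Nat.factorial (m + 1) : ℝ))) = B
  generalize gammaSeries (p * r * (a + μ)) (p * r * (b + μ)) = G
  generalize gammaSeries (p * r * (b + μ)) (p * r * (a + μ)) = H
  generalize Real.exp (a * (p * r)) = E
  generalize Real.exp (b * (p * r)) = F
  generalize Real.exp (-μ * (p * r)) = M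
  field_simp
  ring

end KendallIdentity

theorem parisian_scale_function_CL_pos (p δ lam μ q r : ℝ)
    (hp : 0 < p) (hδ : 0 < δ) (hδp : δ < p) (hlam : 0 < lam) (hμ : 0 < μ)
    (hq : 0 < q) (hr : 0 < r) (x : ℝ) (hx : 0 < x) :
    Real.exp (-lam * r) *
        (p * wq p δ lam μ q x (p * r) +
          ∫ y in (0 : ℝ)..(p * r),
            wq p δ lam μ q x (p * r - y) * ((p * r - y) / r) * Real.exp (-μ * y) *
              ∑' m : ℕ, (μ * lam * r) ^ (m + 1) /
                ((Nat.factorial m : ℝ) * (Nat.factorial (m + 1) : ℝ)) * y ^ m)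
      = Real.exp (q * r) * (p - δ) * WWq p δ lam μ q x -
        1 / (μ * lam) *
          ((q + lam) * WWq p δ lam μ q x - (p - δ) * deriv (WWq p δ lam μ q) x) *
          ((q + lam) * Real.exp (q * r) - p * Cconst p lam μ q r) := by
  have hc : 0 < p - δ := sub_pos.mpr hδp
  have hab := qp_add_mul_qm_add (lam := lam) hp hμ hq
  have hsum := qp_add_qm (lam := lam) (μ := μ) (q := q) hp
  have hd := (qp_sub_qm_pos (lam := lam) hp hμ hq).ne'
  have hken := expTransform_kendall hp hlam hμ hq hr
  have hC := Cconst_eq hp hlam hμ hq hr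
  have hWW : deriv (WWq p δ lam μ q) x = ((q + lam) * WWq p δ lam μ q x -
      lam * μ * Kq (p - δ) lam μ q x) / (p - δ) :=
    (hasDerivAt_Wq_Kq hc hμ hq x).deriv
  have hw : ∀ z, wq p δ lam μ q x z =
      ((p - δ) * WWq p δ lam μ q x * (qp p lam μ q + μ) - lam * μ * Kq (p - δ) lam μ q x) /
        (p * (qp p lam μ q - qm p lam μ q)) * Real.exp (qp p lam μ q * z) -
      ((p - δ) * WWq p δ lam μ q x * (qm p lam μ q + μ) - lam * μ * Kq (p - δ) lam μ q x) /
        (p * (qp p lam μ q - qm p lam μ q)) * Real.exp (qm p lam μ q * z) := by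
    intro z
    rw [wq_eq hδp hp hμ hq, Wq_eq, Kq.eq_def p]
    ring
  have hexp : Real.exp (q * r) = Real.exp (-lam * r) * Real.exp ((q + lam) * r) := by
    rw [← Real.exp_add]
    ring_nf
  simp_rw [hw]
  rw [transform_sub_exp hp hlam hμ hr, hWW, hexp]
  set a := qp p lam μ q
  set b := qm p lam μ q
  generalize expTransform p lam μ r a = Ja at hken hC ⊢
  generalize expTransform p lam μ r b = Jb at hken hC ⊢
  generalize WWq p δ lam μ q x = V
  generalize Kq (p - δ) lam μ q x = K
  have hE : Real.exp ((q + lam) * r) =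
      ((a + μ) * Ja - (b + μ) * Jb) / (p * (a - b)) := by
    rw [hken]
    field_simp
  have hC' : Cconst p lam μ q r = Real.exp (-lam * r) *
      (a * ((a + μ) * Ja) - b * ((b + μ) * Jb)) / (p * (a - b)) := by
    rw [← hC]
    field_simp
  rw [hE, hC']
  generalize Real.exp (-lam * r) = e
  field_simp
  linear_combination e * μ * lam * K * ((Ja - Jb) * hab -
    (Ja * (a + μ) - Jb * (b + μ)) * hsum)
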